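/- Let α ∈ (1,2), let X be a real Banach space, and let {T(t)}_{t>0} be a Riemann-Liouville α-order fractional cosine function on X. Then the family is commutative: T(t)T(s) = T(s)T(t) for all t,s > 0. -/

import Mathlib

/-!
Fix `x`, put `β = 2 - α ∈ (0,1)`, and let `c(σ,τ) = T(σ)T(τ)x - T(τ)T(σ)x` for `σ, τ > 0`, extended
by zero to the plane. The left side of the functional equation is symmetric in `t` and `s`, and so
is the kernel `k(u,v) = u^(β-1) + v^(β-1) - (u+v)^(β-1)` on the right. Subtracting the equation with
`t` and `s` interchanged gives the two-dimensional convolution equation `k * c = 0`. The theorem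
follows from the injectivity of this convolution (`conv_injective`).

*Integrability.* By the uniform boundedness principle `‖T(t)‖ ≤ M t^(-β)` on bounded intervals
(`norm_T_le`), so `c` is bounded by a multiple of `(στ)^(-β)` near the origin, whereas the kernels
are bounded by multiples of `(uv)^(β-1)`. The predicate `Adm` records such bounds; they justify all
uses of Fubini's theorem (`Adm.integrable`, `Adm.conv`).

*Removing `u+v`.* Integrating `k` in the first or in the second variable produces the same term
`(u+v)^β / β`; the difference of the two primitives is `u v^(β-1) - u^(β-1) v` (`kI_sub`). Writing
`Q(a,b) = J_t^a J_s^b c` for the iterated Riemann-Liouville integrals, this says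
`Q(2,β) = Q(β,2)` (`Q_base`). Further fractional integration, through the semigroup law `rl_conv`,
gives `Q(a+α,b) = Q(a,b+α)` for `a, b ≥ 2` (`Q_step`), and by induction
`Q(2+nα,2) = Q(2,2+nα)` for every `n` (`Q_iter`).

*Moments.* Let `w(σ) = ∫_0^s (s-τ) c(σ,τ) dτ`. Multiplied by `Γ(2+nα)`, the left side is the moment
`∫_0^t ((t-σ)^α)^n (t-σ) w(σ) dσ`, while the right side is `O((s^α)^n)` (`moment_bound`). Such growth
forces the density `(t-σ) w(σ)` to vanish where `t-σ > s`. This is a Mikusiński type argument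
(`moment_vanish`): for `r > s` and `ψ = ((t-σ)/r)^α`, expanding `exp(-ψ^N)` in a power series shows
that `∫ (exp(-ψ^N) - 1) ρ → 0`, whereas by dominated convergence the limit is `-∫_{ψ>1} ρ`. As `t` is
arbitrary, `w = 0` on `(0,∞)` for each `s` (`ww_zero`), and two differentiations in `s` give `c = 0`.
-/

open MeasureTheory Filter Topology Set

/-- Riemann-Liouville fractional integral of order `β` of `f` at `t`:
`J_t^β f(t) = (1/Γ(β)) ∫_0^t (t-σ)^{β-1} f(σ) dσ`. -/
noncomputable def RLint {X : Type*} [NormedAddCommGroup X] [NormedSpace ℝ X]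
    (β t : ℝ) (f : ℝ → X) : X :=
  (Real.Gamma β)⁻¹ • ∫ σ in (0:ℝ)..t, (t - σ) ^ (β - 1) • f σ

/-- `{T(t)}_{t>0}` is a Riemann-Liouville `α`-order fractional cosine function. -/
def IsRLFracCosine {X : Type*} [NormedAddCommGroup X] [NormedSpace ℝ X]
    (α : ℝ) (T : ℝ → X →L[ℝ] X) : Prop :=
  (∀ x : X, ContinuousOn (fun t => T t x) (Set.Ioi (0:ℝ))) ∧
  (∀ x : X, Tendsto (fun t : ℝ => t ^ (2 - α) • T t x) (𝓝[>] (0:ℝ))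
      (𝓝 ((Real.Gamma (α - 1))⁻¹ • x))) ∧
  (∀ x : X, ∀ t > (0:ℝ), ∀ s > (0:ℝ),
    Real.Gamma (2 - α) • (∫ σ in (0:ℝ)..(t + s), T σ x) =
      (∫ σ in (0:ℝ)..t, ∫ τ in (0:ℝ)..s, (t - σ) ^ (1 - α) • T σ (T τ x)) +
      (∫ σ in (0:ℝ)..t, ∫ τ in (0:ℝ)..s, (s - τ) ^ (1 - α) • T σ (T τ x)) -
      (∫ σ in (0:ℝ)..t, ∫ τ in (0:ℝ)..s, (t + s - σ - τ) ^ (1 - α) • T σ (T τ x)))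

/-! ### Truncated powers -/

/-- The power `x ^ e` on `(0, R]`, extended by zero. -/
noncomputable def tr (e R x : ℝ) : ℝ := (Ioc 0 R).indicator (fun y => y ^ e) x

theorem tr_nonneg (e R x : ℝ) : 0 ≤ tr e R x :=
  indicator_nonneg (fun _ hy => Real.rpow_nonneg hy.1.le _) x

theorem tr_of_mem {e R x : ℝ} (h0 : 0 < x) (h1 : x ≤ R) : tr e R x = x ^ e :=
  indicator_of_mem (show x ∈ Ioc 0 R from ⟨h0, h1⟩) _

theorem tr_of_nonpos {e R x : ℝ} (h0 : x ≤ 0) : tr e R x = 0 :=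
  indicator_of_notMem (fun h => absurd h.1 (not_lt.2 h0)) _

theorem measurable_tr (e R : ℝ) : Measurable (tr e R) :=
  (measurable_id.pow_const e).indicator measurableSet_Ioc

theorem integrable_tr {e : ℝ} (he : -1 < e) (R : ℝ) : Integrable (tr e R) := by
  rcases le_or_gt R 0 with hR | hR
  · have : tr e R = 0 := by
      funext x
      simp [tr, Ioc_eq_empty (not_lt.2 hR)]
    rw [this]
    exact integrable_zero _ _ _
  · have h := intervalIntegral.intervalIntegrable_rpow' (a := 0) (b := R) he
    rw [intervalIntegrable_iff_integrableOn_Ioc_of_le hR.le] at h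
    exact h.integrable_indicator measurableSet_Ioc

/-- For fixed `s`, only one factor is singular at a time: `τ` and `s - τ` cannot both be smaller than
`s / 2`. -/
theorem integrable_tr_mul_tr {β : ℝ} (h0 : 0 < β) (h1 : β < 1) (R s : ℝ) :
    Integrable (fun τ => tr (β - 1) R (s - τ) * tr (-β) R τ) := by
  have m1 := measurable_tr (β - 1) R
  have m2 := measurable_tr (-β) R
  have hm : AEStronglyMeasurable (fun τ => tr (β - 1) R (s - τ) * tr (-β) R τ) volume := by
    have : Measurable (fun τ => tr (β - 1) R (s - τ) * tr (-β) R τ) := by fun_prop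
    exact this.aestronglyMeasurable
  have hb : Integrable (fun τ => tr (β - 1) R (s - τ) * (s / 2) ^ (-β)
      + (s / 2) ^ (β - 1) * tr (-β) R τ) :=
    (((integrable_tr (by linarith) R).comp_sub_left s).mul_const _).add
      ((integrable_tr (by linarith) R).const_mul _)
  rcases le_or_gt s 0 with hs | hs
  · have : (fun τ => tr (β - 1) R (s - τ) * tr (-β) R τ) = 0 := by
      funext τ
      rcases le_or_gt τ 0 with h | h
      · simp [tr_of_nonpos h]
      · simp [tr_of_nonpos (show s - τ ≤ 0 by linarith)]
    rw [this]
    exact integrable_zero _ _ _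
  refine hb.mono' hm (Eventually.of_forall fun τ => ?_)
  rw [Real.norm_of_nonneg (mul_nonneg (tr_nonneg _ _ _) (tr_nonneg _ _ _))]
  have a1 := tr_nonneg (β - 1) R (s - τ)
  have a2 := tr_nonneg (-β) R τ
  have b1 : 0 < (s / 2) ^ (-β) := by positivity
  have b2 : 0 < (s / 2) ^ (β - 1) := by positivity
  rcases le_or_gt (s / 2) τ with h | h
  · have : tr (-β) R τ ≤ (s / 2) ^ (-β) := by
      by_cases hR : τ ≤ R
      · rw [tr_of_mem (by linarith) hR]
        exact Real.rpow_le_rpow_of_nonpos (by linarith) h (by linarith)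
      · rw [tr, indicator_of_notMem (fun hh => hR hh.2)]
        exact b1.le
    nlinarith [mul_le_mul_of_nonneg_left this a1, mul_nonneg b2.le a2]
  · have : tr (β - 1) R (s - τ) ≤ (s / 2) ^ (β - 1) := by
      by_cases hR : s - τ ≤ R
      · rw [tr_of_mem (by linarith) hR]
        exact Real.rpow_le_rpow_of_nonpos (by linarith) (by linarith) (by linarith)
      · rw [tr, indicator_of_notMem (fun hh => hR hh.2)]
        exact b2.le
    nlinarith [mul_le_mul_of_nonneg_right this a2, mul_nonneg a1 b1.le]

/-- Joint integrability of the convolution integrand in both variables, needed for Fubini. -/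
theorem integrable_tr_conv {β : ℝ} (h0 : 0 < β) (h1 : β < 1) (R : ℝ) :
    Integrable (fun q : ℝ × ℝ => tr (β - 1) R (q.1 - q.2) * tr (-β) R q.2)
      (volume.prod volume) := by
  have := (integrable_tr (e := -β) (by linarith) R).convolution_integrand
    (ContinuousLinearMap.mul ℝ ℝ) (integrable_tr (e := β - 1) (by linarith) R)
  refine this.congr (Eventually.of_forall fun q => ?_)
  simp [mul_comm]

/-! ### Functions on the quarter plane with power singularities on the axes -/

/-- `H` is supported in the open first quadrant and, on each square `(0, R]²`, bounded by a multiple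
of `(u v) ^ e`. Below, kernels have `e = β - 1` and the functions they act on have `e = -β`; both
exponents exceed `-1` for `0 < β < 1`. -/
def Adm {E : Type*} [NormedAddCommGroup E] (e : ℝ) (H : ℝ → ℝ → E) : Prop :=
  (∀ u v, ¬(0 < u ∧ 0 < v) → H u v = 0) ∧
  ∀ R : ℝ, ∃ N : ℝ, 0 ≤ N ∧ ∀ u v, 0 < u → u ≤ R → 0 < v → v ≤ R →
    ‖H u v‖ ≤ N * (u ^ e * v ^ e)

section
variable {X : Type*} [NormedAddCommGroup X] [NormedSpace ℝ X]

theorem Adm.bound {β : ℝ} {H : ℝ → ℝ → ℝ} {c : ℝ → ℝ → X} (hH : Adm (β - 1) H)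
    (hc : Adm (-β) c) (R : ℝ) : ∃ N : ℝ, 0 ≤ N ∧ ∀ y s σ τ, y ≤ R → s ≤ R →
      ‖H (y - σ) (s - τ) • c σ τ‖ ≤ N * ((tr (β - 1) R (y - σ) * tr (-β) R σ) *
        (tr (β - 1) R (s - τ) * tr (-β) R τ)) := by
  obtain ⟨N1, hN1, h1⟩ := hH.2 R
  obtain ⟨N2, hN2, h2⟩ := hc.2 R
  refine ⟨N1 * N2, mul_nonneg hN1 hN2, fun y s σ τ hy hs => ?_⟩
  have hnn : 0 ≤ N1 * N2 * ((tr (β - 1) R (y - σ) * tr (-β) R σ) *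
        (tr (β - 1) R (s - τ) * tr (-β) R τ)) := by
    refine mul_nonneg (mul_nonneg hN1 hN2) (mul_nonneg (mul_nonneg ?_ ?_) (mul_nonneg ?_ ?_)) <;>
      apply tr_nonneg
  by_cases hc0 : 0 < σ ∧ 0 < τ
  · by_cases hH0 : 0 < y - σ ∧ 0 < s - τ
    · obtain ⟨p1, p2⟩ := hc0
      obtain ⟨q1, q2⟩ := hH0
      rw [tr_of_mem p1 (by linarith), tr_of_mem p2 (by linarith), tr_of_mem q1 (by linarith),
        tr_of_mem q2 (by linarith), norm_smul]
      have A := h1 _ _ q1 (by linarith) q2 (by linarith)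
      have B := h2 _ _ p1 (by linarith) p2 (by linarith)
      calc _ ≤ _ := mul_le_mul A B (norm_nonneg _) ((norm_nonneg _).trans A)
        _ = _ := by ring
    · simpa [hH.1 _ _ hH0] using hnn
  · simpa [hc.1 _ _ hc0] using hnn

theorem Adm.integrable {β : ℝ} (h0 : 0 < β) (h1 : β < 1) {H : ℝ → ℝ → ℝ} {c : ℝ → ℝ → X}
    (hH : Adm (β - 1) H) (hHm : Measurable (Function.uncurry H))
    (hc : Adm (-β) c) (hcm : AEStronglyMeasurable (Function.uncurry c) (volume.prod volume))
    (t s : ℝ) :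
    Integrable (fun p : ℝ × ℝ => H (t - p.1) (s - p.2) • c p.1 p.2) (volume.prod volume) := by
  obtain ⟨N, hN, h⟩ := hH.bound hc (max t s)
  refine Integrable.mono' (((integrable_tr_mul_tr h0 h1 (max t s) t).mul_prod
    (integrable_tr_mul_tr h0 h1 (max t s) s)).const_mul N) ?_
    (Eventually.of_forall fun p => h t s p.1 p.2 (le_max_left _ _) (le_max_right _ _))
  have : Measurable (fun p : ℝ × ℝ => H (t - p.1) (s - p.2)) :=
    hHm.comp (g := Function.uncurry H) (f := fun p : ℝ × ℝ => (t - p.1, s - p.2)) (by fun_prop)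
  exact this.aestronglyMeasurable.smul hcm

variable [CompleteSpace X]

/-- Convolving `H * c` once more, in the first variable only, with a locally bounded function `m`
supported in `(0, ∞)` amounts to replacing the kernel `H` by its convolution with `m`. -/
theorem Adm.conv {β : ℝ} (h0 : 0 < β) (h1 : β < 1) {H : ℝ → ℝ → ℝ} {c : ℝ → ℝ → X}
    (hH : Adm (β - 1) H) (hHm : Measurable (Function.uncurry H))
    (hc : Adm (-β) c) (hcm : AEStronglyMeasurable (Function.uncurry c) (volume.prod volume))
    {m : ℝ → ℝ} (hm : Measurable m) (hm0 : ∀ u ≤ 0, m u = 0)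
    (hmb : ∀ R, ∃ N, 0 ≤ N ∧ ∀ u ≤ R, ‖m u‖ ≤ N) (t s : ℝ) :
    ∫ y, m (t - y) • ∫ p : ℝ × ℝ, H (y - p.1) (s - p.2) • c p.1 p.2 =
      ∫ p : ℝ × ℝ, (∫ y, m (t - y) * H (y - p.1) (s - p.2)) • c p.1 p.2 ∧
    Integrable (fun p : ℝ × ℝ => (∫ y, m (t - y) * H (y - p.1) (s - p.2)) • c p.1 p.2) := by
  obtain ⟨N, hN, h⟩ := hH.bound hc (max t s)
  obtain ⟨M, hM, hMb⟩ := hmb t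
  have key : Integrable (fun z : ℝ × (ℝ × ℝ) =>
      m (t - z.1) • (H (z.1 - z.2.1) (s - z.2.2) • c z.2.1 z.2.2))
      (volume.prod (volume.prod volume)) := by
    have hd := (integrable_tr_conv h0 h1 (max t s)).mul_prod
      (integrable_tr_mul_tr h0 h1 (max t s) s)
    have hd' := ((measurePreserving_prodAssoc (volume : Measure ℝ) (volume : Measure ℝ)
      (volume : Measure ℝ)).symm MeasurableEquiv.prodAssoc).integrable_comp_of_integrable hd
    refine Integrable.mono' (hd'.const_mul (M * N)) ?_ (Eventually.of_forall fun z => ?_)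
    · have e1 : Measurable (fun z : ℝ × (ℝ × ℝ) => m (t - z.1)) := by fun_prop
      have e2 : Measurable (fun z : ℝ × (ℝ × ℝ) => H (z.1 - z.2.1) (s - z.2.2)) :=
        hHm.comp (g := Function.uncurry H)
          (f := fun z : ℝ × (ℝ × ℝ) => (z.1 - z.2.1, s - z.2.2)) (by fun_prop)
      exact e1.aestronglyMeasurable.smul (e2.aestronglyMeasurable.smul hcm.comp_snd)
    · rcases z with ⟨y, σ, τ⟩
      simp only [Function.comp, MeasurableEquiv.prodAssoc, MeasurableEquiv.symm_mk,
        MeasurableEquiv.coe_mk, Equiv.prodAssoc_symm_apply]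
      by_cases hy : t - y ≤ 0
      · rw [hm0 _ hy, zero_smul, norm_zero]
        refine mul_nonneg (mul_nonneg hM hN) (mul_nonneg (mul_nonneg ?_ ?_)
          (mul_nonneg ?_ ?_)) <;> apply tr_nonneg
      · rcases le_or_gt y 0 with hy0 | hy0
        · have hz : H (y - σ) (s - τ) • c σ τ = 0 := by
            by_cases hσ : 0 < σ
            · rw [hH.1 _ _ (fun hh => by linarith [hh.1]), zero_smul]
            · rw [hc.1 _ _ (fun hh => hσ hh.1), smul_zero]
          rw [hz, smul_zero, norm_zero]
          refine mul_nonneg (mul_nonneg hM hN) (mul_nonneg (mul_nonneg ?_ ?_)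
            (mul_nonneg ?_ ?_)) <;> apply tr_nonneg
        · rw [norm_smul, mul_assoc]
          exact mul_le_mul (hMb _ (by linarith))
            (h y s σ τ ((not_le.1 hy |> sub_pos.1).le.trans (le_max_left _ _))
              (le_max_right _ _)) (norm_nonneg _) hM
  have e : ∀ p : ℝ × ℝ, (∫ y, m (t - y) * H (y - p.1) (s - p.2)) • c p.1 p.2 =
      ∫ y, m (t - y) • (H (y - p.1) (s - p.2) • c p.1 p.2) := by
    intro p
    rw [← integral_smul_const]
    simp only [mul_smul]
  simp_rw [e, ← integral_smul]
  exact ⟨integral_integral_swap (f := fun y (p : ℝ × ℝ) =>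
      m (t - y) • (H (y - p.1) (s - p.2) • c p.1 p.2)) key, key.integral_prod_right⟩
end

/-! ### Riemann-Liouville kernels -/

/-- The kernel `u_+ ^ (a - 1) / Γ(a)` of the Riemann-Liouville fractional integral of order `a`. -/
noncomputable def rl (a u : ℝ) : ℝ := if 0 < u then u ^ (a - 1) / Real.Gamma a else 0

theorem rl_of_pos {a u : ℝ} (hu : 0 < u) : rl a u = u ^ (a - 1) / Real.Gamma a := if_pos hu

theorem rl_of_nonpos {a u : ℝ} (hu : u ≤ 0) : rl a u = 0 := if_neg (not_lt.2 hu)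

theorem measurable_rl (a : ℝ) : Measurable (rl a) :=
  Measurable.ite measurableSet_Ioi (by fun_prop) measurable_const

theorem rl_nonneg {a : ℝ} (ha : 0 < a) (u : ℝ) : 0 ≤ rl a u := by
  unfold rl
  have := Real.Gamma_pos_of_pos ha
  split_ifs <;> positivity

theorem rl_bdd {a : ℝ} (ha : 1 ≤ a) (R : ℝ) : ∃ N, 0 ≤ N ∧ ∀ u ≤ R, ‖rl a u‖ ≤ N := by
  have hG := Real.Gamma_pos_of_pos (show 0 < a by linarith)
  refine ⟨|R| ^ (a - 1) / Real.Gamma a, by positivity, fun u hu => ?_⟩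
  rw [Real.norm_of_nonneg (rl_nonneg (by linarith) u)]
  rcases le_or_gt u 0 with h | h
  · rw [rl_of_nonpos h]; positivity
  · rw [rl_of_pos h]
    gcongr
    exact hu.trans (le_abs_self _)

theorem beta_scaled {a b x : ℝ} (ha : 0 < a) (hb : 0 < b) (hx : 0 < x) :
    ∫ y in (0:ℝ)..x, (x - y) ^ (a - 1) * y ^ (b - 1) =
      x ^ (a + b - 1) * (Real.Gamma a * Real.Gamma b / Real.Gamma (a + b)) := by
  have h := Complex.betaIntegral_scaled (b : ℂ) (a : ℂ) hx
  rw [Complex.betaIntegral_eq_Gamma_mul_div _ _ (by simpa) (by simpa)] at h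
  apply Complex.ofReal_injective
  rw [← intervalIntegral.integral_ofReal]
  have e : ∫ y in (0:ℝ)..x, (((x - y) ^ (a - 1) * y ^ (b - 1) : ℝ) : ℂ) =
      ∫ y in (0:ℝ)..x, (y : ℂ) ^ ((b : ℂ) - 1) * ((x : ℂ) - y) ^ ((a : ℂ) - 1) := by
    apply intervalIntegral.integral_congr
    intro y hy
    rw [uIcc_of_le hx.le] at hy
    simp only
    rw [Complex.ofReal_mul, Complex.ofReal_cpow (by linarith [hy.2]), Complex.ofReal_cpow hy.1]
    push_cast
    ring
  rw [e, h]
  rw [Complex.ofReal_mul, Complex.ofReal_cpow hx.le, Complex.ofReal_div, Complex.ofReal_mul,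
    ← Complex.Gamma_ofReal, ← Complex.Gamma_ofReal, ← Complex.Gamma_ofReal]
  push_cast
  rw [add_comm (b : ℂ), mul_comm (Complex.Gamma b)]

theorem integral_eq_interval {E : Type*} [NormedAddCommGroup E] [NormedSpace ℝ E]
    {x : ℝ} (hx : 0 ≤ x) {f g : ℝ → E} (h1 : ∀ y, ¬ (0 < y ∧ y < x) → f y = 0)
    (h2 : ∀ y, 0 < y → y < x → f y = g y) : ∫ y, f y = ∫ y in (0:ℝ)..x, g y := by
  rw [intervalIntegral.integral_of_le hx, integral_Ioc_eq_integral_Ioo,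
    ← setIntegral_eq_integral_of_forall_compl_eq_zero (s := Ioo 0 x) (fun y hy => h1 y hy)]
  exact setIntegral_congr_fun measurableSet_Ioo fun y hy => h2 y hy.1 hy.2

/-- The semigroup law of fractional integration, which is the Beta integral. -/
theorem rl_conv {a b : ℝ} (ha : 0 < a) (hb : 0 < b) (x : ℝ) :
    ∫ y, rl a (x - y) * rl b y = rl (a + b) x := by
  have z : ∀ y, ¬ (0 < y ∧ y < x) → rl a (x - y) * rl b y = 0 := by
    intro y hy
    by_cases h : 0 < y
    · rw [rl_of_nonpos (show x - y ≤ 0 by by_contra hh; exact hy ⟨h, by linarith⟩), zero_mul]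
    · rw [rl_of_nonpos (not_lt.1 h), mul_zero]
  rcases le_or_gt x 0 with hx | hx
  · rw [rl_of_nonpos hx]
    have : (fun y => rl a (x - y) * rl b y) = fun _ => 0 := by
      funext y
      exact z y (fun h => by linarith [h.1, h.2])
    rw [this, integral_zero]
  · rw [integral_eq_interval hx.le (g := fun y =>
      (Real.Gamma a * Real.Gamma b)⁻¹ * ((x - y) ^ (a - 1) * y ^ (b - 1))) z]
    · rw [intervalIntegral.integral_const_mul, beta_scaled ha hb hx, rl_of_pos hx]
      have := (Real.Gamma_pos_of_pos ha).ne'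
      have := (Real.Gamma_pos_of_pos hb).ne'
      field_simp
    · intro y h1 h2
      rw [rl_of_pos h1, rl_of_pos (by linarith)]
      field_simp

theorem rl_conv_shift {a b : ℝ} (ha : 0 < a) (hb : 0 < b) (t σ : ℝ) :
    ∫ y, rl a (t - y) * rl b (y - σ) = rl (a + b) (t - σ) := by
  rw [← rl_conv ha hb, ← integral_add_right_eq_self _ σ]
  congr 1; funext y; congr 2 <;> ring

/-! ### The kernel of the functional equation -/

/-- The kernel `u ^ (β - 1) + v ^ (β - 1) - (u + v) ^ (β - 1)` of the fractional cosine equation with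
`β = 2 - α`, extended by zero outside the open first quadrant. -/
noncomputable def kk (β u v : ℝ) : ℝ :=
  if 0 < u ∧ 0 < v then u ^ (β - 1) + v ^ (β - 1) - (u + v) ^ (β - 1) else 0

/-- The primitive `∫_0^u kk β y v dy` of the kernel in its first variable. By symmetry of `kk`, the
primitive in the second variable is `kI β v u`. -/
noncomputable def kI (β u v : ℝ) : ℝ :=
  if 0 < u ∧ 0 < v then u ^ β / β + u * v ^ (β - 1) - ((u + v) ^ β - v ^ β) / β else 0

theorem rl_conv_kk {β : ℝ} (h0 : 0 < β) (t σ v : ℝ) :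
    ∫ y, rl 1 (t - y) * kk β (y - σ) v = kI β (t - σ) v := by
  have : ∫ y, rl 1 (t - y) * kk β (y - σ) v = ∫ y, rl 1 (t - σ - y) * kk β y v := by
    rw [← integral_add_right_eq_self _ σ]
    congr 1; funext y; congr 2 <;> ring
  rw [this]
  generalize t - σ = x
  have z : ∀ y, ¬ (0 < y ∧ y < x) → rl 1 (x - y) * kk β y v = 0 := by
    intro y hy
    by_cases h : 0 < y
    · rw [rl_of_nonpos (show x - y ≤ 0 by by_contra hh; exact hy ⟨h, by linarith⟩), zero_mul]
    · rw [kk, if_neg (fun hh => h hh.1), mul_zero]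
  by_cases hxv : 0 < x ∧ 0 < v
  · obtain ⟨hx, hv⟩ := hxv
    rw [integral_eq_interval hx.le (g := fun y =>
      y ^ (β - 1) + v ^ (β - 1) - (y + v) ^ (β - 1)) z]
    · have i1 : IntervalIntegrable (fun y : ℝ => y ^ (β - 1)) volume 0 x :=
        intervalIntegral.intervalIntegrable_rpow' (by linarith)
      have i2 : IntervalIntegrable (fun y : ℝ => (y + v) ^ (β - 1)) volume 0 x := by
        have := (intervalIntegral.intervalIntegrable_rpow' (a := v) (b := x + v)
          (r := β - 1) (by linarith)).comp_add_right v
        simpa using this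
      rw [intervalIntegral.integral_sub (i1.add (by simp)) i2,
        intervalIntegral.integral_add i1 (by simp), integral_rpow (Or.inl (by linarith)),
        intervalIntegral.integral_comp_add_right (fun y => y ^ (β - 1)),
        integral_rpow (Or.inl (by linarith)), kI, if_pos ⟨hx, hv⟩]
      simp [h0.ne']
    · intro y h1 h2
      rw [rl_of_pos (by linarith), kk, if_pos ⟨h1, hv⟩]
      simp
  · rw [kI, if_neg hxv]
    have : (fun y => rl 1 (x - y) * kk β y v) = fun _ => 0 := by
      funext y
      by_cases hv : 0 < v
      · exact z y fun h => hxv ⟨by linarith [h.1, h.2], hv⟩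
      · rw [kk, if_neg (fun hh => hv hh.2), mul_zero]
    rw [this, integral_zero]

/-- The nonseparable term `(u + v) ^ β / β` is common to both primitives of `kk`, so their difference
is a difference of products of Riemann-Liouville kernels. -/
theorem kI_sub {β : ℝ} (h0 : 0 < β) (u v : ℝ) : kI β u v - kI β v u =
    Real.Gamma β * (rl 2 u * rl β v) - Real.Gamma β * (rl β u * rl 2 v) := by
  have hG := (Real.Gamma_pos_of_pos h0).ne'
  have e2 : (2:ℝ) - 1 = 1 := by norm_num
  by_cases h : 0 < u ∧ 0 < v
  · rw [kI, kI, if_pos h, if_pos h.symm, rl_of_pos h.1, rl_of_pos h.2, rl_of_pos h.1,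
      rl_of_pos h.2, e2, Real.rpow_one, Real.rpow_one, Real.Gamma_two, add_comm v u]
    field_simp
    ring
  · rw [kI, kI, if_neg h, if_neg (fun hh => h hh.symm)]
    by_cases hu : 0 < u
    · have : v ≤ 0 := by by_contra hh; exact h ⟨hu, by linarith⟩
      simp [rl_of_nonpos this]
    · simp [rl_of_nonpos (not_lt.1 hu)]

/-! ### Moments of geometric growth -/

section
variable {X : Type*} [NormedAddCommGroup X] [NormedSpace ℝ X]

/-- Expand `exp (-ψ ^ N)` in its power series and integrate term by term: apart from the constant
term, only the moments of order `N * k` with `k ≥ 1` occur. -/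
theorem moment_exp_bound {Ω : Type*} [MeasurableSpace Ω] {μ : Measure Ω} {ρ : Ω → X}
    (hρ : Integrable ρ μ) {ψ : Ω → ℝ} (hψ : Measurable ψ) {B : ℝ}
    (hB : ∀ᵐ ω ∂μ, 0 ≤ ψ ω ∧ ψ ω ≤ B) {C q : ℝ}
    (hC : ∀ n : ℕ, ‖∫ ω, ψ ω ^ n • ρ ω ∂μ‖ ≤ C * q ^ n) (N : ℕ) :
    ‖(∫ ω, Real.exp (-ψ ω ^ N) • ρ ω ∂μ) - ∫ ω, ρ ω ∂μ‖ ≤ C * (Real.exp (q ^ N) - 1) := by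
  have expsum : ∀ x : ℝ, HasSum (fun k : ℕ => x ^ k / (k.factorial : ℝ)) (Real.exp x) := by
    intro x
    rw [Real.exp_eq_exp_ℝ]
    exact NormedSpace.expSeries_div_hasSum_exp x
  have hs : HasSum (fun k : ℕ => ∫ ω, ((-ψ ω ^ N) ^ k / (k.factorial : ℝ)) • ρ ω ∂μ)
      (∫ ω, Real.exp (-ψ ω ^ N) • ρ ω ∂μ) := by
    refine hasSum_integral_of_dominated_convergence
      (fun k ω => (B ^ N) ^ k / (k.factorial : ℝ) * ‖ρ ω‖) ?_ ?_ ?_ ?_ ?_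
    · intro k
      have : Measurable fun ω => (-ψ ω ^ N) ^ k / (k.factorial : ℝ) := by fun_prop
      exact this.aestronglyMeasurable.smul hρ.1
    · intro k
      filter_upwards [hB] with ω hω
      rw [norm_smul, norm_div, norm_pow, norm_neg, norm_pow, Real.norm_of_nonneg hω.1]
      simp only [RCLike.norm_natCast]
      have := hω.1
      gcongr
      exact hω.2
    · exact Eventually.of_forall fun ω => ((expsum (B ^ N)).summable.mul_right _)
    · have : (fun ω => ∑' k : ℕ, (B ^ N) ^ k / (k.factorial : ℝ) * ‖ρ ω‖) =
          fun ω => Real.exp (B ^ N) * ‖ρ ω‖ := by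
        funext ω
        rw [tsum_mul_right, (expsum _).tsum_eq]
      rw [this]
      exact hρ.norm.const_mul _
    · exact Eventually.of_forall fun ω => (expsum _).smul_const _
  have h1 := (hasSum_nat_add_iff' 1).2 hs
  have h2 := ((hasSum_nat_add_iff' 1).2 (expsum (q ^ N))).mul_left C
  simp only [Finset.range_one, Finset.sum_singleton, pow_zero, Nat.factorial_zero,
    Nat.cast_one, div_one, one_smul] at h1 h2
  rw [← h1.tsum_eq]
  refine tsum_of_norm_bounded h2 fun k => ?_
  have e : ∀ ω, ((-ψ ω ^ N) ^ (k + 1) / ((k + 1).factorial : ℝ)) • ρ ω =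
      ((-1) ^ (k + 1) / ((k + 1).factorial : ℝ)) • (ψ ω ^ (N * (k + 1)) • ρ ω) := by
    intro ω
    rw [smul_smul, pow_mul, neg_pow]
    congr 1; ring
  simp_rw [e]
  rw [integral_smul, norm_smul, norm_div, norm_pow, norm_neg, norm_one, one_pow]
  simp only [RCLike.norm_natCast]
  calc _ ≤ 1 / ((k + 1).factorial : ℝ) * (C * q ^ (N * (k + 1))) := by
        gcongr; exact hC _
    _ = _ := by rw [pow_mul]; ring

/-- If the moments `∫ ψ ^ n ρ` decay like `q ^ n` with `q < 1`, then `ρ` has zero integral over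
`{ψ > 1}`. Indeed `exp (-ψ ^ N) - 1` tends to `-1` on that set and to `0` on `{ψ < 1}`, while its
integral against `ρ` tends to `0` by `moment_exp_bound`. -/
theorem moment_vanish {Ω : Type*} [MeasurableSpace Ω] {μ : Measure Ω} {ρ : Ω → X}
    (hρ : Integrable ρ μ) {ψ : Ω → ℝ} (hψ : Measurable ψ) {B : ℝ}
    (hB : ∀ᵐ ω ∂μ, 0 ≤ ψ ω ∧ ψ ω ≤ B) (h1 : ∀ᵐ ω ∂μ, ψ ω ≠ 1) {C q : ℝ} (hq0 : 0 ≤ q)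
    (hq1 : q < 1) (hC : ∀ n : ℕ, ‖∫ ω, ψ ω ^ n • ρ ω ∂μ‖ ≤ C * q ^ n) :
    ∫ ω, {ω | 1 < ψ ω}.indicator ρ ω ∂μ = 0 := by
  have l1 : Tendsto (fun N : ℕ => ∫ ω, (Real.exp (-ψ ω ^ N) • ρ ω - ρ ω) ∂μ) atTop
      (𝓝 (∫ ω, -({ω | 1 < ψ ω}.indicator ρ ω) ∂μ)) := by
    refine tendsto_integral_of_dominated_convergence (fun ω => ‖ρ ω‖ + ‖ρ ω‖) ?_
      (hρ.norm.add hρ.norm) ?_ ?_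
    · intro N
      have : Measurable fun ω => Real.exp (-ψ ω ^ N) := by fun_prop
      exact (this.aestronglyMeasurable.smul hρ.1).sub hρ.1
    · intro N
      filter_upwards [hB] with ω hω
      refine (norm_sub_le _ _).trans ?_
      gcongr
      rw [norm_smul, Real.norm_of_nonneg (Real.exp_nonneg _)]
      refine mul_le_of_le_one_left (norm_nonneg _) (Real.exp_le_one_iff.2 ?_)
      have := pow_nonneg hω.1 N
      linarith
    · filter_upwards [hB, h1] with ω hω hne
      rcases lt_or_gt_of_ne hne with h | h
      · rw [indicator_of_notMem (by simpa using h.le), neg_zero]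
        have := (tendsto_pow_atTop_nhds_zero_of_lt_one hω.1 h).neg
        have := ((Real.continuous_exp.tendsto _).comp this).smul_const (ρ ω)
        simpa using this.sub_const (ρ ω)
      · rw [indicator_of_mem (by simpa using h)]
        have := (tendsto_pow_atTop_atTop_of_one_lt h)
        have := (Real.tendsto_exp_neg_atTop_nhds_zero.comp this).smul_const (ρ ω)
        simpa using this.sub_const (ρ ω)
  have l2 : Tendsto (fun N : ℕ => ∫ ω, (Real.exp (-ψ ω ^ N) • ρ ω - ρ ω) ∂μ) atTop (𝓝 0) := by
    have l3 : Tendsto (fun N : ℕ => C * (Real.exp (q ^ N) - 1)) atTop (𝓝 0) := by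
      have := (Real.continuous_exp.tendsto _).comp (tendsto_pow_atTop_nhds_zero_of_lt_one hq0 hq1)
      simpa using (this.sub_const 1).const_mul C
    refine squeeze_zero_norm (fun N => ?_) l3
    rw [integral_sub _ hρ]
    · exact moment_exp_bound hρ hψ hB hC N
    · have : Measurable fun ω => Real.exp (-ψ ω ^ N) := by fun_prop
      refine hρ.norm.mono' (this.aestronglyMeasurable.smul hρ.1) ?_
      filter_upwards [hB] with ω hω
      rw [norm_smul, Real.norm_of_nonneg (Real.exp_nonneg _)]
      refine mul_le_of_le_one_left (norm_nonneg _) (Real.exp_le_one_iff.2 ?_)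
      have := pow_nonneg hω.1 N
      linarith
  have := tendsto_nhds_unique l1 l2
  rw [integral_neg] at this
  exact neg_eq_zero.1 this

variable [CompleteSpace X]

/-! ### Recovering a function from its integrals -/

theorem eq_zero_of_integral_zero {f : ℝ → X} {b : ℝ} (hf : ContinuousOn f (Ioo 0 b))
    (hi : ∀ p, 0 < p → p < b → IntervalIntegrable f volume 0 p)
    (h : ∀ p, 0 < p → p < b → ∫ σ in (0:ℝ)..p, f σ = 0) (p : ℝ) (hp : 0 < p) (hpb : p < b) :
    f p = 0 := by
  have hat : ContinuousAt f p := hf.continuousAt (Ioo_mem_nhds hp hpb)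
  have d := intervalIntegral.integral_hasDerivAt_right (hi p hp hpb)
    (hf.stronglyMeasurableAtFilter isOpen_Ioo p ⟨hp, hpb⟩) hat
  have e : (fun u => ∫ σ in (0:ℝ)..u, f σ) =ᶠ[𝓝 p] fun _ => 0 := by
    filter_upwards [Ioo_mem_nhds hp hpb] with u hu using h u hu.1 hu.2
  exact d.unique ((hasDerivAt_const p (0:X)).congr_of_eventuallyEq e)

/-- The second derivative in `s` of `∫_0^s (s - σ) f(σ) dσ` is `f`. -/
theorem eq_zero_of_integral_mul_zero {f : ℝ → X} (hf : ContinuousOn f (Ioi 0))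
    (hi : ∀ p, 0 < p → IntervalIntegrable f volume 0 p)
    (h : ∀ s, 0 < s → ∫ σ in (0:ℝ)..s, (s - σ) • f σ = 0) (p : ℝ) (hp : 0 < p) :
    f p = 0 := by
  have hi2 : ∀ p, 0 < p → IntervalIntegrable (fun σ => σ • f σ) volume 0 p := fun p hp =>
    (hi p hp).continuousOn_smul continuousOn_id
  have key : ∀ p, 0 < p → ∫ σ in (0:ℝ)..p, f σ = 0 := by
    intro p hp
    have hat : ContinuousAt f p := hf.continuousAt (Ioi_mem_nhds hp)
    have d1 := intervalIntegral.integral_hasDerivAt_right (hi p hp)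
      (hf.stronglyMeasurableAtFilter isOpen_Ioi p hp) hat
    have d2 := intervalIntegral.integral_hasDerivAt_right (hi2 p hp)
      ((continuousOn_id.smul hf).stronglyMeasurableAtFilter isOpen_Ioi p hp)
      (continuousAt_id.smul hat)
    have d3 := ((hasDerivAt_id p).smul d1).sub d2
    have e : (fun u => id u • ∫ σ in (0:ℝ)..u, f σ) - (fun u => ∫ σ in (0:ℝ)..u, σ • f σ)
        =ᶠ[𝓝 p] fun _ => 0 := by
      filter_upwards [Ioi_mem_nhds hp] with u hu
      rw [← h u hu]
      simp only [Pi.sub_apply, id, sub_smul]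
      have hu' : IntervalIntegrable (fun σ => u • f σ) volume 0 u := (hi u hu).smul u
      rw [intervalIntegral.integral_sub hu' (hi2 u hu), intervalIntegral.integral_smul]
    have := d3.unique ((hasDerivAt_const p (0:X)).congr_of_eventuallyEq e)
    simpa using this
  exact eq_zero_of_integral_zero (b := p + 1) (hf.mono Ioo_subset_Ioi_self)
    (fun p hp _ => hi p hp) (fun p hp _ => key p hp) p hp (by linarith)
end

/-! ### Bounds for the kernels -/

theorem rpow_le_trunc {u R e f : ℝ} (hu : 0 < u) (hR : u ≤ R) (hef : f ≤ e) :
    u ^ e ≤ |R| ^ (e - f) * u ^ f := by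
  have h : u ^ e = u ^ (e - f) * u ^ f := by rw [← Real.rpow_add hu]; congr 1; ring
  rw [h]
  gcongr
  exact hR.trans (le_abs_self _)

theorem adm_rl {β a b : ℝ} (h0 : 0 < β) (ha : β ≤ a) (hb : β ≤ b) :
    Adm (β - 1) (fun u v => rl a u * rl b v) := by
  have hGa := Real.Gamma_pos_of_pos (h0.trans_le ha)
  have hGb := Real.Gamma_pos_of_pos (h0.trans_le hb)
  refine ⟨fun u v h => ?_, fun R => ⟨(|R| ^ (a - 1 - (β - 1)) / Real.Gamma a) *
    (|R| ^ (b - 1 - (β - 1)) / Real.Gamma b), by positivity, fun u v hu huR hv hvR => ?_⟩⟩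
  · by_cases hu : 0 < u
    · have : v ≤ 0 := by by_contra hh; exact h ⟨hu, by linarith⟩
      simp [rl_of_nonpos this]
    · simp [rl_of_nonpos (not_lt.1 hu)]
  · rw [Real.norm_of_nonneg (mul_nonneg (rl_nonneg (h0.trans_le ha) _)
      (rl_nonneg (h0.trans_le hb) _)), rl_of_pos hu, rl_of_pos hv]
    have A := rpow_le_trunc (e := a - 1) (f := β - 1) hu huR (by linarith)
    have B := rpow_le_trunc (e := b - 1) (f := β - 1) hv hvR (by linarith)
    calc _ ≤ (|R| ^ (a - 1 - (β - 1)) * u ^ (β - 1) / Real.Gamma a) *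
          (|R| ^ (b - 1 - (β - 1)) * v ^ (β - 1) / Real.Gamma b) := by gcongr
      _ = _ := by ring

theorem measurable_rl_rl (a b : ℝ) :
    Measurable (Function.uncurry fun u v : ℝ => rl a u * rl b v) := by
  have := measurable_rl a
  have := measurable_rl b
  simp only [Function.uncurry_def]
  fun_prop

/-- Restriction of `φ` to the open first quadrant, extended by zero. -/
noncomputable def quad (φ : ℝ → ℝ → ℝ) (u v : ℝ) : ℝ := if 0 < u ∧ 0 < v then φ u v else 0

theorem measurable_quad {φ : ℝ → ℝ → ℝ} (h : Measurable (Function.uncurry φ)) :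
    Measurable (Function.uncurry (quad φ)) := by
  have hs : MeasurableSet {p : ℝ × ℝ | 0 < p.1 ∧ 0 < p.2} :=
    (measurableSet_lt measurable_const measurable_fst).inter
      (measurableSet_lt measurable_const measurable_snd)
  exact Measurable.ite hs h measurable_const

theorem adm_quad {β : ℝ} {φ : ℝ → ℝ → ℝ} (h1 : β < 1)
    (h : ∀ u v, 0 < u → 0 < v → ‖φ u v‖ ≤ u ^ (β - 1) + v ^ (β - 1)) :
    Adm (β - 1) (quad φ) := by
  refine ⟨fun u v h => if_neg h, fun R => ⟨2 * |R| ^ (1 - β), by positivity,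
    fun u v hu huR hv hvR => ?_⟩⟩
  rw [quad, if_pos ⟨hu, hv⟩]
  have A := rpow_le_trunc (e := 0) (f := β - 1) hu huR (by linarith)
  have B := rpow_le_trunc (e := 0) (f := β - 1) hv hvR (by linarith)
  rw [Real.rpow_zero, show (0:ℝ) - (β - 1) = 1 - β by ring] at A B
  have pu : 0 < u ^ (β - 1) := by positivity
  have pv : 0 < v ^ (β - 1) := by positivity
  have := h u v hu hv
  nlinarith [mul_le_mul_of_nonneg_left A pv.le, mul_le_mul_of_nonneg_left B pu.le]

theorem rpow_add_le {β u v : ℝ} (h1 : β < 1) (hu : 0 < u) (hv : 0 < v) :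
    (u + v) ^ (β - 1) ≤ u ^ (β - 1) :=
  Real.rpow_le_rpow_of_nonpos hu (by linarith) (by linarith)

theorem kk_eq_quad (β : ℝ) : kk β =
    quad (fun u v => u ^ (β - 1) + v ^ (β - 1) - (u + v) ^ (β - 1)) := rfl

theorem adm_kk {β : ℝ} (h1 : β < 1) : Adm (β - 1) (kk β) := by
  rw [kk_eq_quad]
  refine adm_quad h1 fun u v hu hv => ?_
  have := rpow_add_le h1 hu hv
  have p1 : 0 < (u + v) ^ (β - 1) := by positivity
  have p2 : 0 < v ^ (β - 1) := by positivity
  rw [Real.norm_of_nonneg] <;> linarith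

theorem measurable_kk (β : ℝ) : Measurable (Function.uncurry (kk β)) := by
  rw [kk_eq_quad]
  apply measurable_quad
  simp only [Function.uncurry_def]
  fun_prop

theorem kk_symm (β u v : ℝ) : kk β u v = kk β v u := by
  simp only [kk, and_comm (a := 0 < u), add_comm u v, add_comm (u ^ (β - 1))]

/-! ### Iterated fractional integrals in two variables -/

section
variable {X : Type*} [NormedAddCommGroup X]

theorem Adm.swap {e : ℝ} {c : ℝ → ℝ → X} (hc : Adm e c) : Adm e (fun σ τ => c τ σ) := by
  refine ⟨fun u v h => hc.1 v u fun hh => h hh.symm, fun R => ?_⟩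
  obtain ⟨N, hN, h⟩ := hc.2 R
  refine ⟨N, hN, fun u v hu huR hv hvR => ?_⟩
  rw [mul_comm (u ^ e)]
  exact h v u hv hvR hu huR

theorem aesm_swap {c : ℝ → ℝ → X}
    (hcm : AEStronglyMeasurable (Function.uncurry c) (volume.prod volume)) :
    AEStronglyMeasurable (Function.uncurry fun σ τ => c τ σ) (volume.prod volume) :=
  hcm.prod_swap

variable [NormedSpace ℝ X]

theorem integral_swap' (H : ℝ → ℝ → ℝ) (c : ℝ → ℝ → X) :
    ∫ p : ℝ × ℝ, H p.2 p.1 • c p.2 p.1 = ∫ p : ℝ × ℝ, H p.1 p.2 • c p.1 p.2 :=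
  integral_prod_swap (μ := (volume : Measure ℝ)) (ν := (volume : Measure ℝ))
    (fun p : ℝ × ℝ => H p.1 p.2 • c p.1 p.2)

/-- The fractional integral of `c` of order `a` in the first variable and order `b` in the second,
evaluated at `(t, s)`. For `c` supported in the first quadrant this is
`∫_0^t ∫_0^s (t-σ)^(a-1) (s-τ)^(b-1) c(σ,τ) dτ dσ / (Γ(a) Γ(b))`. -/
noncomputable def Q (c : ℝ → ℝ → X) (a b t s : ℝ) : X :=
  ∫ p : ℝ × ℝ, (rl a (t - p.1) * rl b (s - p.2)) • c p.1 p.2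

theorem Q_swap (c : ℝ → ℝ → X) (a b t s : ℝ) :
    Q (fun σ τ => c τ σ) b a s t = Q c a b t s := by
  unfold Q
  rw [← integral_swap' (fun x y => rl a (t - x) * rl b (s - y)) c]
  simp only [mul_comm]

variable [CompleteSpace X]

theorem Q_conv_left {β : ℝ} (h0 : 0 < β) (h1 : β < 1) {c : ℝ → ℝ → X} (hc : Adm (-β) c)
    (hcm : AEStronglyMeasurable (Function.uncurry c) (volume.prod volume))
    {m a b : ℝ} (hm : 1 ≤ m) (ha : β ≤ a) (hb : β ≤ b) (t s : ℝ) :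
    ∫ y, rl m (t - y) • Q c a b y s = Q c (m + a) b t s := by
  have h := ((adm_rl h0 ha hb).conv h0 h1 (measurable_rl_rl a b) hc hcm (measurable_rl m)
    (fun u hu => rl_of_nonpos hu) (rl_bdd hm) t s).1
  unfold Q
  rw [h]
  congr 1; funext p; congr 1
  simp_rw [← mul_assoc]
  rw [integral_mul_const, rl_conv_shift (by linarith) (by linarith)]

theorem Q_conv_right {β : ℝ} (h0 : 0 < β) (h1 : β < 1) {c : ℝ → ℝ → X} (hc : Adm (-β) c)
    (hcm : AEStronglyMeasurable (Function.uncurry c) (volume.prod volume))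
    {m a b : ℝ} (hm : 1 ≤ m) (ha : β ≤ a) (hb : β ≤ b) (t s : ℝ) :
    ∫ y, rl m (s - y) • Q c a b t y = Q c a (m + b) t s := by
  rw [← Q_swap, ← Q_conv_left h0 h1 hc.swap (aesm_swap hcm) hm hb ha]
  simp only [Q_swap]

/-- The equation `kk * c = 0`, integrated once in the first variable. -/
theorem kI_zero {β : ℝ} (h0 : 0 < β) (h1 : β < 1) {c : ℝ → ℝ → X} (hc : Adm (-β) c)
    (hcm : AEStronglyMeasurable (Function.uncurry c) (volume.prod volume))
    (hk : ∀ t s, ∫ p : ℝ × ℝ, kk β (t - p.1) (s - p.2) • c p.1 p.2 = 0) (t s : ℝ) :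
    ∫ p : ℝ × ℝ, kI β (t - p.1) (s - p.2) • c p.1 p.2 = 0 ∧
    Integrable (fun p : ℝ × ℝ => kI β (t - p.1) (s - p.2) • c p.1 p.2) := by
  have h := ((adm_kk h1).conv h0 h1 (measurable_kk β) hc hcm (measurable_rl 1)
    (fun u hu => rl_of_nonpos hu) (rl_bdd le_rfl) t s)
  simp only [rl_conv_kk h0, hk, smul_zero, integral_zero] at h
  exact ⟨h.1.symm, h.2⟩

/-- Subtract the two integrated forms of `kk * c = 0` and use `kI_sub`. -/
theorem Q_base {β : ℝ} (h0 : 0 < β) (h1 : β < 1) {c : ℝ → ℝ → X} (hc : Adm (-β) c)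
    (hcm : AEStronglyMeasurable (Function.uncurry c) (volume.prod volume))
    (hk : ∀ t s, ∫ p : ℝ × ℝ, kk β (t - p.1) (s - p.2) • c p.1 p.2 = 0) (t s : ℝ) :
    Q c 2 β t s = Q c β 2 t s := by
  obtain ⟨e1, i1⟩ := kI_zero h0 h1 hc hcm hk t s
  obtain ⟨e2, i2⟩ := kI_zero h0 h1 hc.swap (aesm_swap hcm) (fun t s => by
    rw [← hk s t, ← integral_swap' (fun x y => kk β (s - x) (t - y)) c]
    simp only [kk_symm β (s - _)]) s t
  rw [integral_swap' (fun x y => kI β (s - y) (t - x)) c] at e2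
  have i2' : Integrable (fun p : ℝ × ℝ => kI β (s - p.2) (t - p.1) • c p.1 p.2) := i2.swap
  have hsub : ∫ p : ℝ × ℝ, (kI β (t - p.1) (s - p.2) • c p.1 p.2 -
      kI β (s - p.2) (t - p.1) • c p.1 p.2) = 0 := by
    rw [integral_sub i1 i2', e1, e2, sub_zero]
  simp only [← sub_smul, kI_sub h0] at hsub
  have j1 := ((adm_rl h0 (show β ≤ 2 by linarith) le_rfl).integrable h0 h1
    (measurable_rl_rl 2 β) hc hcm t s)
  have j2 := ((adm_rl h0 le_rfl (show β ≤ 2 by linarith)).integrable h0 h1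
    (measurable_rl_rl β 2) hc hcm t s)
  simp only [← mul_sub, mul_smul, integral_smul] at hsub
  have hG := (Real.Gamma_pos_of_pos h0).ne'
  rw [smul_eq_zero] at hsub
  have := hsub.resolve_left hG
  simp only [sub_smul] at this
  have h3 : Q c 2 β t s - Q c β 2 t s = 0 := by
    rw [← this]
    exact (integral_sub j1 j2).symm
  exact sub_eq_zero.1 h3

/-- One order `α = 2 - β` of integration can be moved from one variable to the other. It follows
from `Q_base` by integrating to the orders `a - β` in `t` and `b - β` in `s`. -/
theorem Q_step {β : ℝ} (h0 : 0 < β) (h1 : β < 1) {c : ℝ → ℝ → X} (hc : Adm (-β) c)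
    (hcm : AEStronglyMeasurable (Function.uncurry c) (volume.prod volume))
    (hk : ∀ t s, ∫ p : ℝ × ℝ, kk β (t - p.1) (s - p.2) • c p.1 p.2 = 0)
    {a b : ℝ} (ha : 2 ≤ a) (hb : 2 ≤ b) (t s : ℝ) :
    Q c (a + (2 - β)) b t s = Q c a (b + (2 - β)) t s := by
  have h2 : β ≤ 2 := by linarith
  have e1 : ∀ t s, Q c ((a - β) + 2) β t s = Q c ((a - β) + β) 2 t s := by
    intro t s
    rw [← Q_conv_left h0 h1 hc hcm (by linarith) h2 le_rfl,
      ← Q_conv_left h0 h1 hc hcm (by linarith) le_rfl h2]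
    simp only [Q_base h0 h1 hc hcm hk]
  have e2 : Q c ((a - β) + 2) ((b - β) + β) t s = Q c ((a - β) + β) ((b - β) + 2) t s := by
    rw [← Q_conv_right h0 h1 hc hcm (by linarith) (by linarith) le_rfl,
      ← Q_conv_right h0 h1 hc hcm (by linarith) (by linarith) h2]
    simp only [e1]
  convert e2 using 2 <;> ring

theorem Q_iter {β : ℝ} (h0 : 0 < β) (h1 : β < 1) {c : ℝ → ℝ → X} (hc : Adm (-β) c)
    (hcm : AEStronglyMeasurable (Function.uncurry c) (volume.prod volume))
    (hk : ∀ t s, ∫ p : ℝ × ℝ, kk β (t - p.1) (s - p.2) • c p.1 p.2 = 0)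
    (n : ℕ) (t s : ℝ) : ∀ b : ℝ, 2 ≤ b →
    Q c (2 + n * (2 - β)) b t s = Q c 2 (b + n * (2 - β)) t s := by
  induction n with
  | zero => simp
  | succ n ih =>
    intro b hb
    have hn : (0:ℝ) ≤ n * (2 - β) := mul_nonneg (by positivity) (by linarith)
    have := Q_step h0 h1 hc hcm hk (a := 2 + n * (2 - β)) (b := b) (by linarith) hb t s
    have h3 := ih (b + (2 - β)) (by linarith)
    push_cast
    convert this.trans h3 using 2 <;> ring
end

/-! ### Injectivity of the convolution -/

section
variable {X : Type*} [NormedAddCommGroup X]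

theorem aesm_slice {c : ℝ → ℝ → X} {β : ℝ} (hc : Adm (-β) c)
    (hcc : ContinuousOn (Function.uncurry c) (Ioi 0 ×ˢ Ioi 0)) {σ : ℝ} (hσ : 0 < σ) :
    ContinuousOn (c σ) (Ioi 0) ∧ AEStronglyMeasurable (c σ) volume := by
  have h : ContinuousOn (c σ) (Ioi 0) :=
    hcc.comp (f := fun τ : ℝ => (σ, τ)) (by fun_prop) (fun τ hτ => ⟨hσ, hτ⟩)
  refine ⟨h, ?_⟩
  have e : c σ = (Ioi 0).indicator (c σ) := by
    funext τ
    by_cases hτ : 0 < τ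
    · rw [indicator_of_mem (show τ ∈ Ioi 0 from hτ)]
    · rw [indicator_of_notMem (by simpa using hτ), hc.1 _ _ fun hh => hτ hh.2]
  rw [e, aestronglyMeasurable_indicator_iff measurableSet_Ioi]
  exact h.aestronglyMeasurable measurableSet_Ioi

theorem Adm.slice_bound {c : ℝ → ℝ → X} {β : ℝ} (hc : Adm (-β) c) (h0 : 0 < β)
    {σ₀ : ℝ} (hσ : 0 < σ₀) (R : ℝ) : ∃ M, 0 ≤ M ∧ ∀ σ τ, σ₀ / 2 < σ → σ < 2 * σ₀ → τ ≤ R →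
      ‖c σ τ‖ ≤ M * tr (-β) R τ := by
  obtain ⟨N, hN, h⟩ := hc.2 (max (2 * σ₀) R)
  refine ⟨N * (σ₀ / 2) ^ (-β), by positivity, fun σ τ h1 h2 hR => ?_⟩
  rcases le_or_gt τ 0 with hτ | hτ
  · rw [hc.1 _ _ (fun hh => by linarith [hh.2]), tr_of_nonpos hτ]; simp
  · rw [tr_of_mem hτ hR, mul_assoc]
    refine (h σ τ (by linarith) (h2.le.trans (le_max_left _ _)) hτ
      (hR.trans (le_max_right _ _))).trans ?_
    gcongr N * (?_ * _)
    exact Real.rpow_le_rpow_of_nonpos (by linarith) h1.le (by linarith)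

variable [NormedSpace ℝ X]

/-- The second primitive in the second variable, `∫_0^s (s-τ) c(σ,τ) dτ` for `c` supported in the first
quadrant. -/
noncomputable def ww (c : ℝ → ℝ → X) (s σ : ℝ) : X := ∫ τ, rl 2 (s - τ) • c σ τ

theorem continuousOn_ww {c : ℝ → ℝ → X} {β : ℝ} (hc : Adm (-β) c) (h0 : 0 < β) (h1 : β < 1)
    (hcc : ContinuousOn (Function.uncurry c) (Ioi 0 ×ˢ Ioi 0)) (s : ℝ) :
    ContinuousOn (ww c s) (Ioi 0) := by
  intro σ₀ hσ
  have hσ : 0 < σ₀ := hσ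
  refine ContinuousAt.continuousWithinAt ?_
  obtain ⟨M, hM, hb⟩ := hc.slice_bound h0 hσ s
  obtain ⟨N, hN, hNb⟩ := rl_bdd (a := 2) (by norm_num) s
  have near : ∀ᶠ σ in 𝓝 σ₀, σ₀ / 2 < σ ∧ σ < 2 * σ₀ :=
    Ioo_mem_nhds (by linarith) (by linarith)
  have mrl : Measurable fun τ => rl 2 (s - τ) := by
    have := measurable_rl 2
    fun_prop
  refine continuousAt_of_dominated (bound := fun τ => N * (M * tr (-β) s τ)) ?_ ?_ ?_ ?_
  · filter_upwards [near] with σ hs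
    exact mrl.aestronglyMeasurable.smul (aesm_slice hc hcc (by linarith [hs.1])).2
  · filter_upwards [near] with σ hs
    refine Eventually.of_forall fun τ => ?_
    have nn : 0 ≤ N * (M * tr (-β) s τ) := mul_nonneg hN (mul_nonneg hM (tr_nonneg _ _ _))
    rcases le_or_gt s τ with h | h
    · rw [rl_of_nonpos (by linarith), zero_smul, norm_zero]; exact nn
    · rcases le_or_gt τ 0 with h' | h'
      · rw [hc.1 _ _ (fun hh => by linarith [hh.2]), smul_zero, norm_zero]; exact nn
      · rw [norm_smul]
        exact mul_le_mul (hNb _ (by linarith)) (hb σ τ hs.1 hs.2 h.le) (norm_nonneg _) hN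
  · exact ((integrable_tr (by linarith) s).const_mul M).const_mul N
  · refine Eventually.of_forall fun τ => ?_
    by_cases hτ : 0 < τ
    · have : ContinuousAt (fun σ => c σ τ) σ₀ :=
        (hcc.continuousAt (prod_mem_nhds (Ioi_mem_nhds hσ) (Ioi_mem_nhds hτ))).comp
          (f := fun σ : ℝ => (σ, τ)) (by fun_prop)
      exact continuousAt_const.smul this
    · have : (fun σ => rl 2 (s - τ) • c σ τ) = fun _ => 0 := by
        funext σ
        rw [hc.1 _ _ (fun hh => hτ hh.2), smul_zero]
      rw [this]
      exact continuousAt_const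

theorem rl_two_add {e u : ℝ} (he : 0 ≤ e) : Real.Gamma (2 + e) * rl (2 + e) u =
    (max u 0) ^ e * rl 2 u := by
  have hG := (Real.Gamma_pos_of_pos (show 0 < 2 + e by linarith)).ne'
  rcases le_or_gt u 0 with h | h
  · simp [rl_of_nonpos h]
  · rw [rl_of_pos h, rl_of_pos h, max_eq_left h.le, Real.Gamma_two, mul_div_cancel₀ _ hG,
      div_one, ← Real.rpow_add h]
    congr 1; ring

variable [CompleteSpace X]

/-- The integral on the left is `Γ(2 + n α) Q(2 + n α, 2)` with `α = 2 - β`. By `Q_iter` it equals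
`Γ(2 + n α) Q(2, 2 + n α)`, whose kernel contains the factor `(s - τ) ^ (n α) ≤ s ^ (n α)`. -/
theorem moment_bound {β : ℝ} (h0 : 0 < β) (h1 : β < 1) {c : ℝ → ℝ → X} (hc : Adm (-β) c)
    (hcm : AEStronglyMeasurable (Function.uncurry c) (volume.prod volume))
    (hk : ∀ t s, ∫ p : ℝ × ℝ, kk β (t - p.1) (s - p.2) • c p.1 p.2 = 0)
    {t s : ℝ} (hs : 0 < s) : ∃ C, ∀ n : ℕ,
      ‖∫ σ, ((max (t - σ) 0) ^ (2 - β)) ^ n • (rl 2 (t - σ) • ww c s σ)‖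
        ≤ C * (s ^ (2 - β)) ^ n := by
  have hb2 : β ≤ 2 := by linarith
  have j := (adm_rl h0 hb2 hb2).integrable h0 h1 (measurable_rl_rl 2 2) hc hcm t s
  refine ⟨∫ p : ℝ × ℝ, ‖(rl 2 (t - p.1) * rl 2 (s - p.2)) • c p.1 p.2‖, fun n => ?_⟩
  have hn : (0:ℝ) ≤ n * (2 - β) := mul_nonneg (by positivity) (by linarith)
  have hG := (Real.Gamma_pos_of_pos (show 0 < 2 + n * (2 - β) by linarith))
  have pw : ∀ x : ℝ, 0 ≤ x → (x ^ (2 - β)) ^ n = x ^ (n * (2 - β)) := by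
    intro x hx
    rw [← Real.rpow_mul_natCast hx, mul_comm]
  have e1 : ∫ σ, ((max (t - σ) 0) ^ (2 - β)) ^ n • (rl 2 (t - σ) • ww c s σ) =
      Real.Gamma (2 + n * (2 - β)) • Q c (2 + n * (2 - β)) 2 t s := by
    have jn := (adm_rl h0 (show β ≤ 2 + n * (2 - β) by linarith) hb2).integrable h0 h1
      (measurable_rl_rl _ 2) hc hcm t s
    rw [Q, Measure.volume_eq_prod, integral_prod _ jn, ← integral_smul]
    congr 1; funext σ
    simp only [mul_smul, integral_smul]
    rw [smul_smul, smul_smul, rl_two_add hn, pw _ (le_max_right _ _), ww]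
  rw [e1, Q_iter h0 h1 hc hcm hk n t s 2 le_rfl, Q, ← integral_smul,
    mul_comm (∫ p : ℝ × ℝ, ‖_‖), ← integral_const_mul]
  refine norm_integral_le_of_norm_le (j.norm.const_mul _) (Eventually.of_forall fun p => ?_)
  rw [pw s hs.le]
  rcases le_or_gt p.2 0 with hp | hp
  · rw [hc.1 _ _ (fun hh => by linarith [hh.2])]; simp
  · have : Real.Gamma (2 + n * (2 - β)) • (rl 2 (t - p.1) * rl (2 + n * (2 - β)) (s - p.2)) •
        c p.1 p.2 = ((max (s - p.2) 0) ^ (n * (2 - β))) •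
          ((rl 2 (t - p.1) * rl 2 (s - p.2)) • c p.1 p.2) := by
      rw [smul_smul, smul_smul]
      congr 1
      rw [mul_left_comm, rl_two_add hn]; ring
    rw [this, norm_smul, Real.norm_of_nonneg (by positivity)]
    gcongr
    exact max_le (by linarith) hs.le

theorem ww_zero {β : ℝ} (h0 : 0 < β) (h1 : β < 1) {c : ℝ → ℝ → X} (hc : Adm (-β) c)
    (hcm : AEStronglyMeasurable (Function.uncurry c) (volume.prod volume))
    (hcc : ContinuousOn (Function.uncurry c) (Ioi 0 ×ˢ Ioi 0))
    (hk : ∀ t s, ∫ p : ℝ × ℝ, kk β (t - p.1) (s - p.2) • c p.1 p.2 = 0)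
    {s σ₀ : ℝ} (hs : 0 < s) (hσ₀ : 0 < σ₀) : ww c s σ₀ = 0 := by
  -- any `t` with `σ₀ < t - s` serves
  set t := σ₀ + s + 1 with ht
  have hb2 : β ≤ 2 := by linarith
  have j := (adm_rl h0 hb2 hb2).integrable h0 h1 (measurable_rl_rl 2 2) hc hcm t s
  have hρ : Integrable (fun σ => rl 2 (t - σ) • ww c s σ) := by
    have := j.integral_prod_left
    simp only [mul_smul, integral_smul] at this
    exact this
  have hρ0 : ∀ σ ≤ 0, rl 2 (t - σ) • ww c s σ = 0 := by
    intro σ hσ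
    have : ww c s σ = 0 := by
      unfold ww
      have : (fun τ => rl 2 (s - τ) • c σ τ) = fun _ => 0 := by
        funext τ
        rw [hc.1 _ _ (fun hh => by linarith [hh.1]), smul_zero]
      rw [this, integral_zero]
    rw [this, smul_zero]
  obtain ⟨C, hC⟩ := moment_bound h0 h1 hc hcm hk (t := t) hs
  have h2 : 0 < 2 - β := by linarith
  have key : ∀ p, 0 < p → p < t - s → ∫ σ in (0:ℝ)..p, rl 2 (t - σ) • ww c s σ = 0 := by
    intro p hp hpt
    have hr : 0 < t - p := by linarith
    have hψm : Measurable fun σ : ℝ => (max (t - σ) 0 / (t - p)) ^ (2 - β) := by fun_prop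
    -- `ψ σ > 1` exactly when `σ < p`, and `q < 1` because `s < t - p`
    have mv := moment_vanish (μ := volume.restrict (Ioi (0:ℝ))) hρ.restrict hψm
      (B := (t / (t - p)) ^ (2 - β)) (C := C) (q := (s / (t - p)) ^ (2 - β)) ?_ ?_
      (by positivity) ?_ ?_
    · rw [setIntegral_eq_integral_of_forall_compl_eq_zero] at mv
      · rw [← mv]
        symm
        have gt : ∀ σ, 1 < (max (t - σ) 0 / (t - p)) ^ (2 - β) ↔ σ < p := by
          intro σ
          constructor
          · intro h
            by_contra hh
            refine absurd h (not_lt.2 (Real.rpow_le_one (by positivity) ?_ h2.le))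
            rw [div_le_one hr]
            exact max_le (by linarith) hr.le
          · intro h
            refine Real.one_lt_rpow ?_ h2
            rw [one_lt_div hr]
            exact lt_max_of_lt_left (by linarith)
        refine integral_eq_interval hp.le (fun σ hσ => ?_) (fun σ _ hσ => ?_)
        · by_cases hσp : σ < p
          · rw [indicator_of_mem (by exact (gt σ).2 hσp)]
            exact hρ0 σ (by by_contra hh; exact hσ ⟨by linarith, hσp⟩)
          · rw [indicator_of_notMem]
            exact fun hh => hσp ((gt σ).1 hh)
        · exact indicator_of_mem (by exact (gt σ).2 hσ) _
      · intro σ hσ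
        have hσ' : σ ≤ 0 := by simpa using hσ
        rw [indicator_apply, hρ0 σ hσ', ite_self]
    · refine (ae_restrict_iff' measurableSet_Ioi).2 (Eventually.of_forall fun σ hσ => ?_)
      have hσ : 0 < σ := hσ
      refine ⟨by positivity, ?_⟩
      gcongr
      exact max_le (by linarith) (by linarith)
    · refine ae_restrict_of_ae ?_
      have : ∀ᵐ σ : ℝ, σ ≠ p := by simp [ae_iff, measure_singleton]
      filter_upwards [this] with σ hσ h
      refine hσ ?_
      have h : (max (t - σ) 0 / (t - p)) ^ (2 - β) = (1:ℝ) ^ (2 - β) := by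
        rw [h, Real.one_rpow]
      have h := Real.rpow_left_injOn h2.ne' (show 0 ≤ max (t - σ) 0 / (t - p) by positivity)
        (show (1:ℝ) ∈ {y : ℝ | 0 ≤ y} from zero_le_one (α := ℝ)) h
      rw [div_eq_one_iff_eq hr.ne'] at h
      rcases le_total (t - σ) 0 with h' | h'
      · rw [max_eq_right h'] at h; linarith
      · rw [max_eq_left h'] at h; linarith
    · refine Real.rpow_lt_one (by positivity) ?_ h2
      rw [div_lt_one hr]; linarith
    · intro n
      rw [setIntegral_eq_integral_of_forall_compl_eq_zero]
      · have e : ∀ σ, ((max (t - σ) 0 / (t - p)) ^ (2 - β)) ^ n • (rl 2 (t - σ) • ww c s σ) =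
            (((t - p) ^ (2 - β)) ^ n)⁻¹ •
              (((max (t - σ) 0) ^ (2 - β)) ^ n • (rl 2 (t - σ) • ww c s σ)) := by
          intro σ
          rw [smul_smul (((t - p) ^ (2 - β)) ^ n)⁻¹, Real.div_rpow (le_max_right _ _) hr.le,
            div_pow, div_eq_inv_mul]
        simp_rw [e]
        rw [integral_smul, norm_smul, Real.norm_of_nonneg (by positivity),
          Real.div_rpow hs.le hr.le, div_pow]
        calc _ ≤ (((t - p) ^ (2 - β)) ^ n)⁻¹ * (C * (s ^ (2 - β)) ^ n) := by
              gcongr; exact hC n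
          _ = _ := by ring
      · intro σ hσ
        have hσ' : σ ≤ 0 := by simpa using hσ
        rw [hρ0 σ hσ', smul_zero]
  have cont : ContinuousOn (fun σ => rl 2 (t - σ) • ww c s σ) (Ioo 0 (t - s)) := by
    have c1 : ContinuousOn (fun σ => (t - σ) • ww c s σ) (Ioo 0 (t - s)) :=
      (by fun_prop : ContinuousOn (fun σ : ℝ => t - σ) _).smul
        ((continuousOn_ww hc h0 h1 hcc s).mono Ioo_subset_Ioi_self)
    refine c1.congr fun σ hσ => ?_
    simp only
    rw [rl_of_pos (by linarith [hσ.2]), Real.Gamma_two, div_one,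
      show (2:ℝ) - 1 = 1 by norm_num, Real.rpow_one]
  have := eq_zero_of_integral_zero cont (fun p _ _ => hρ.intervalIntegrable) key σ₀ hσ₀
    (by linarith)
  refine (smul_eq_zero.1 this).resolve_left ?_
  rw [rl_of_pos (by linarith), Real.Gamma_two]
  have : 0 < t - σ₀ := by linarith
  positivity

/-- A continuous function on the open first quadrant with singularities at most `(σ τ) ^ (-β)` that is
annihilated by convolution with `kk β` vanishes. -/
theorem conv_injective {β : ℝ} (h0 : 0 < β) (h1 : β < 1) {c : ℝ → ℝ → X} (hc : Adm (-β) c)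
    (hcm : AEStronglyMeasurable (Function.uncurry c) (volume.prod volume))
    (hcc : ContinuousOn (Function.uncurry c) (Ioi 0 ×ˢ Ioi 0))
    (hk : ∀ t s, ∫ p : ℝ × ℝ, kk β (t - p.1) (s - p.2) • c p.1 p.2 = 0)
    {σ τ : ℝ} (hσ : 0 < σ) (hτ : 0 < τ) : c σ τ = 0 := by
  obtain ⟨hcσ, hm⟩ := aesm_slice hc hcc hσ
  refine eq_zero_of_integral_mul_zero hcσ (fun p hp => ?_) (fun s hs => ?_) τ hτ
  · obtain ⟨M, hM, hb⟩ := hc.slice_bound h0 hσ p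
    rw [intervalIntegrable_iff_integrableOn_Ioc_of_le hp.le]
    refine Integrable.mono' (((integrable_tr (e := -β) (by linarith) p).const_mul M).restrict
      (s := Ioc 0 p)) hm.restrict ?_
    exact (ae_restrict_iff' measurableSet_Ioc).2 (Eventually.of_forall fun x hx =>
      hb σ x (by linarith) (by linarith) hx.2)
  · rw [← ww_zero h0 h1 hc hcm hcc hk hs hσ, ww]
    symm
    refine integral_eq_interval hs.le (fun x hx => ?_) (fun x hx hxs => ?_)
    · by_cases h : 0 < x
      · rw [rl_of_nonpos (by by_contra hh; exact hx ⟨h, by linarith⟩), zero_smul]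
      · rw [hc.1 _ _ (fun hh => h hh.2), smul_zero]
    · rw [rl_of_pos (by linarith), Real.Gamma_two, div_one,
        show (2:ℝ) - 1 = 1 by norm_num, Real.rpow_one]
end

/-! ### Fractional cosine functions -/

section
variable {X : Type*} [NormedAddCommGroup X] [NormedSpace ℝ X]

/-- Uniform boundedness principle for the operators `t ^ β • T t`, `0 < t ≤ R`. -/
theorem norm_T_le [CompleteSpace X] {β : ℝ} {T : ℝ → X →L[ℝ] X}
    (h1 : ∀ x : X, ContinuousOn (fun t => T t x) (Ioi (0:ℝ))) {L : X → X}
    (h2 : ∀ x : X, Tendsto (fun t : ℝ => t ^ β • T t x) (𝓝[>] (0:ℝ)) (𝓝 (L x))) (R : ℝ) :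
    ∃ M, 0 ≤ M ∧ ∀ t, 0 < t → t ≤ R → ‖T t‖ ≤ M * t ^ (-β) := by
  have : ∃ C, ∀ t : Ioc (0:ℝ) R, ‖((t:ℝ) ^ β) • T t‖ ≤ C := by
    refine banach_steinhaus fun x => ?_
    have ev : ∀ᶠ t in 𝓝[>] (0:ℝ), ‖t ^ β • T t x‖ < ‖L x‖ + 1 :=
      (h2 x).norm.eventually_lt_const (by linarith)
    obtain ⟨δ, hδ, hδ'⟩ := mem_nhdsGT_iff_exists_Ioo_subset.1 ev
    have hδ : 0 < δ := hδ
    obtain ⟨C, hC⟩ := (isCompact_Icc (a := δ) (b := R)).exists_bound_of_continuousOn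
      (f := fun t : ℝ => t ^ β • T t x) (by
        have c1 : ContinuousOn (fun t : ℝ => t ^ β) (Icc δ R) := fun t ht =>
          (Real.continuousAt_rpow_const t β (Or.inl (by linarith [ht.1]))).continuousWithinAt
        exact c1.smul ((h1 x).mono fun t ht => hδ.trans_le ht.1))
    refine ⟨max (‖L x‖ + 1) C, fun t => ?_⟩
    rcases lt_or_ge (t:ℝ) δ with h | h
    · exact (le_of_lt (hδ' ⟨t.2.1, h⟩)).trans (le_max_left _ _)
    · exact (hC t ⟨h, t.2.2⟩).trans (le_max_right _ _)
  obtain ⟨C, hC⟩ := this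
  refine ⟨max C 0, le_max_right _ _, fun t ht htR => ?_⟩
  have h := hC ⟨t, ht, htR⟩
  rw [norm_smul, Real.norm_of_nonneg (by positivity)] at h
  have hp : 0 < t ^ β := by positivity
  rw [Real.rpow_neg ht.le, ← div_eq_mul_inv, le_div_iff₀ hp, mul_comm]
  exact h.trans (le_max_left _ _)

/-- The function `(σ, τ) ↦ T(σ)T(τ)x`, extended by zero outside the open first quadrant. -/
noncomputable def dd (T : ℝ → X →L[ℝ] X) (x : X) (σ τ : ℝ) : X :=
  if 0 < σ ∧ 0 < τ then T σ (T τ x) else 0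

theorem adm_dd {β : ℝ} {T : ℝ → X →L[ℝ] X}
    (hb : ∀ R : ℝ, ∃ M, 0 ≤ M ∧ ∀ t, 0 < t → t ≤ R → ‖T t‖ ≤ M * t ^ (-β)) (x : X) :
    Adm (-β) (dd T x) := by
  refine ⟨fun u v h => if_neg h, fun R => ?_⟩
  obtain ⟨M, hM, h⟩ := hb R
  refine ⟨M * M * ‖x‖, by positivity, fun u v hu huR hv hvR => ?_⟩
  rw [dd, if_pos ⟨hu, hv⟩]
  calc ‖T u (T v x)‖ ≤ ‖T u‖ * (‖T v‖ * ‖x‖) :=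
        (T u).le_opNorm_of_le ((T v).le_opNorm x)
    _ ≤ (M * u ^ (-β)) * ((M * v ^ (-β)) * ‖x‖) := by
        gcongr
        · exact h u hu huR
        · exact h v hv hvR
    _ = _ := by ring

/-- Strong continuity in each variable gives joint continuity, since `‖T σ‖` is locally bounded. -/
theorem continuousOn_dd {β : ℝ} {T : ℝ → X →L[ℝ] X}
    (h1 : ∀ x : X, ContinuousOn (fun t => T t x) (Ioi (0:ℝ))) (h0 : 0 < β)
    (hb : ∀ R : ℝ, ∃ M, 0 ≤ M ∧ ∀ t, 0 < t → t ≤ R → ‖T t‖ ≤ M * t ^ (-β)) (x : X) :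
    ContinuousOn (Function.uncurry (dd T x)) (Ioi 0 ×ˢ Ioi 0) := by
  have hc : ContinuousOn (fun p : ℝ × ℝ => T p.1 (T p.2 x)) (Ioi 0 ×ˢ Ioi 0) := by
    rintro ⟨σ, τ⟩ ⟨hσ, hτ⟩
    have hσ : 0 < σ := hσ
    have hτ : 0 < τ := hτ
    refine ContinuousAt.continuousWithinAt ?_
    obtain ⟨M, hM, h⟩ := hb (2 * σ)
    have c1 : ContinuousAt (fun p : ℝ × ℝ => T p.1 (T τ x)) (σ, τ) :=
      ContinuousAt.comp (f := fun p : ℝ × ℝ => p.1) (g := fun s => T s (T τ x))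
        ((h1 (T τ x)).continuousAt (Ioi_mem_nhds hσ)) continuousAt_fst
    have c2 : ContinuousAt (fun p : ℝ × ℝ => T p.2 x) (σ, τ) :=
      ContinuousAt.comp (f := fun p : ℝ × ℝ => p.2) (g := fun s => T s x)
        ((h1 x).continuousAt (Ioi_mem_nhds hτ)) continuousAt_snd
    have z : Tendsto (fun p : ℝ × ℝ => T p.1 (T p.2 x - T τ x)) (𝓝 (σ, τ)) (𝓝 0) := by
      have l : Tendsto (fun p : ℝ × ℝ => M * (σ / 2) ^ (-β) * ‖T p.2 x - T τ x‖)
          (𝓝 (σ, τ)) (𝓝 0) := by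
        have := ((c2.tendsto.sub_const (T τ x)).norm).const_mul (M * (σ / 2) ^ (-β))
        simpa using this
      refine squeeze_zero_norm' ?_ l
      have near : ∀ᶠ p : ℝ × ℝ in 𝓝 (σ, τ), p.1 ∈ Ioo (σ / 2) (2 * σ) :=
        continuousAt_fst.eventually_mem (Ioo_mem_nhds (by simp; linarith) (by simp; linarith))
      filter_upwards [near] with p hp
      refine (T p.1).le_of_opNorm_le ((h p.1 (by linarith [hp.1]) hp.2.le).trans ?_) _
      gcongr M * ?_
      exact Real.rpow_le_rpow_of_nonpos (by linarith) hp.1.le (by linarith)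
    have := z.add c1.tendsto
    simp only [map_sub, sub_add_cancel, zero_add] at this
    exact this
  refine hc.congr ?_
  rintro ⟨σ, τ⟩ ⟨hσ, hτ⟩
  exact if_pos ⟨hσ, hτ⟩

theorem aesm_of_continuousOn {E : Type*} [NormedAddCommGroup E] {e : ℝ} {c : ℝ → ℝ → E}
    (hc : Adm e c) (hcc : ContinuousOn (Function.uncurry c) (Ioi 0 ×ˢ Ioi 0)) :
    AEStronglyMeasurable (Function.uncurry c) (volume.prod volume) := by
  have hm : MeasurableSet (Ioi (0:ℝ) ×ˢ Ioi (0:ℝ)) := measurableSet_Ioi.prod measurableSet_Ioi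
  have e : Function.uncurry c = (Ioi (0:ℝ) ×ˢ Ioi (0:ℝ)).indicator (Function.uncurry c) := by
    funext p
    by_cases hp : p ∈ Ioi (0:ℝ) ×ˢ Ioi (0:ℝ)
    · rw [indicator_of_mem hp]
    · rw [indicator_of_notMem hp]
      exact hc.1 _ _ hp
  rw [e, aestronglyMeasurable_indicator_iff hm]
  exact hcc.aestronglyMeasurable hm

/-- The integral over the plane against a kernel on the first quadrant is the iterated interval
integral occurring in the definition of a fractional cosine function. -/
theorem quad_integral [CompleteSpace X] {β : ℝ} (h0 : 0 < β) (h1 : β < 1) {φ : ℝ → ℝ → ℝ}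
    (hφ : Measurable (Function.uncurry φ))
    (hφb : ∀ u v, 0 < u → 0 < v → ‖φ u v‖ ≤ u ^ (β - 1) + v ^ (β - 1))
    {T : ℝ → X →L[ℝ] X} {x : X} (hc : Adm (-β) (dd T x))
    (hcm : AEStronglyMeasurable (Function.uncurry (dd T x)) (volume.prod volume))
    {t s : ℝ} (ht : 0 < t) (hs : 0 < s) :
    Integrable (fun p : ℝ × ℝ => quad φ (t - p.1) (s - p.2) • dd T x p.1 p.2) ∧
    ∫ p : ℝ × ℝ, quad φ (t - p.1) (s - p.2) • dd T x p.1 p.2 =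
      ∫ σ in (0:ℝ)..t, ∫ τ in (0:ℝ)..s, φ (t - σ) (s - τ) • T σ (T τ x) := by
  have j := (adm_quad h1 hφb).integrable h0 h1 (measurable_quad hφ) hc hcm t s
  refine ⟨j, ?_⟩
  rw [Measure.volume_eq_prod, integral_prod _ j]
  have z : ∀ σ τ, ¬ ((0 < σ ∧ σ < t) ∧ (0 < τ ∧ τ < s)) →
      quad φ (t - σ) (s - τ) • dd T x σ τ = 0 := by
    intro σ τ h
    by_cases hd : 0 < σ ∧ 0 < τ
    · rw [quad, if_neg (fun hh => h ⟨⟨hd.1, by linarith [hh.1]⟩, hd.2, by linarith [hh.2]⟩),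
        zero_smul]
    · rw [dd, if_neg hd, smul_zero]
  refine integral_eq_interval ht.le (fun σ hσ => ?_) (fun σ hσ hσt => ?_)
  · have : (fun τ => quad φ (t - σ) (s - τ) • dd T x σ τ) = fun _ => 0 := by
      funext τ
      exact z σ τ fun hh => hσ hh.1
    simp only [this, integral_zero]
  · refine integral_eq_interval hs.le (fun τ hτ => z σ τ fun hh => hτ hh.2) (fun τ hτ hτs => ?_)
    rw [quad, if_pos ⟨by linarith, by linarith⟩, dd, if_pos ⟨hσ, hτ⟩]

/-- The functional equation as a single convolution over the plane. -/
theorem kk_dd [CompleteSpace X] {α : ℝ} (hα : α ∈ Ioo (1:ℝ) 2) {T : ℝ → X →L[ℝ] X}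
    (hT : IsRLFracCosine α T) {x : X} (hc : Adm (-(2 - α)) (dd T x))
    (hcm : AEStronglyMeasurable (Function.uncurry (dd T x)) (volume.prod volume))
    {t s : ℝ} (ht : 0 < t) (hs : 0 < s) :
    ∫ p : ℝ × ℝ, kk (2 - α) (t - p.1) (s - p.2) • dd T x p.1 p.2 =
      Real.Gamma (2 - α) • (∫ σ in (0:ℝ)..(t + s), T σ x) := by
  obtain ⟨ha1, ha2⟩ := hα
  have h0 : 0 < 2 - α := by linarith
  have h1 : 2 - α < 1 := by linarith
  have pos : ∀ u : ℝ, 0 < u → 0 < u ^ (2 - α - 1) := fun u hu => by positivity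
  obtain ⟨i1, e1⟩ := quad_integral h0 h1 (φ := fun u _ => u ^ (2 - α - 1))
    (by simp only [Function.uncurry_def]; fun_prop)
    (fun u v hu hv => by
      rw [Real.norm_of_nonneg (pos u hu).le]; linarith [pos v hv]) hc hcm ht hs
  obtain ⟨i2, e2⟩ := quad_integral h0 h1 (φ := fun _ v => v ^ (2 - α - 1))
    (by simp only [Function.uncurry_def]; fun_prop)
    (fun u v hu hv => by
      rw [Real.norm_of_nonneg (pos v hv).le]; linarith [pos u hu]) hc hcm ht hs
  obtain ⟨i3, e3⟩ := quad_integral h0 h1 (φ := fun u v => (u + v) ^ (2 - α - 1))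
    (by simp only [Function.uncurry_def]; fun_prop)
    (fun u v hu hv => by
      rw [Real.norm_of_nonneg (pos _ (add_pos hu hv)).le]
      linarith [pos v hv, rpow_add_le h1 hu hv]) hc hcm ht hs
  have e : ∀ p : ℝ × ℝ, kk (2 - α) (t - p.1) (s - p.2) • dd T x p.1 p.2 =
      quad (fun u _ => u ^ (2 - α - 1)) (t - p.1) (s - p.2) • dd T x p.1 p.2 +
      quad (fun _ v => v ^ (2 - α - 1)) (t - p.1) (s - p.2) • dd T x p.1 p.2 -
      quad (fun u v => (u + v) ^ (2 - α - 1)) (t - p.1) (s - p.2) • dd T x p.1 p.2 := by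
    intro p
    rw [← add_smul, ← sub_smul]
    congr 1
    simp only [kk, quad]
    split_ifs <;> simp
  simp_rw [e]
  rw [integral_sub (by exact i1.add i2) i3, integral_add i1 i2, e1, e2, e3, hT.2.2 x t ht s hs]
  simp only [show 2 - α - 1 = 1 - α by ring, show ∀ σ τ : ℝ, t - σ + (s - τ) = t + s - σ - τ
    from fun σ τ => by ring]
end

/-- A Riemann-Liouville `α`-order fractional cosine function is commutative. -/
theorem rl_frac_cosine_commutes
    {X : Type*} [NormedAddCommGroup X] [NormedSpace ℝ X] [CompleteSpace X]
    (α : ℝ) (hα : α ∈ Set.Ioo (1:ℝ) 2) (T : ℝ → X →L[ℝ] X)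
    (hT : IsRLFracCosine α T) :
    ∀ t > (0:ℝ), ∀ s > (0:ℝ), ∀ x : X, T t (T s x) = T s (T t x) := by
  intro t ht s hs x
  have h0 : 0 < 2 - α := by linarith [hα.2]
  have h1 : 2 - α < 1 := by linarith [hα.1]
  have hb := norm_T_le hT.1 hT.2.1
  have hd := adm_dd hb x
  have hdc := continuousOn_dd hT.1 h0 hb x
  have hdm := aesm_of_continuousOn hd hdc
  have hd' := hd.swap
  have hdc' : ContinuousOn (Function.uncurry fun σ τ => dd T x τ σ) (Ioi 0 ×ˢ Ioi 0) :=
    hdc.comp (f := Prod.swap) continuous_swap.continuousOn fun p hp => ⟨hp.2, hp.1⟩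
  have hdm' := aesm_swap hdm
  have hc : Adm (-(2 - α)) (fun σ τ => dd T x σ τ - dd T x τ σ) := by
    refine ⟨fun u v h => (congrArg₂ (· - ·) (hd.1 u v h) (hd'.1 u v h)).trans (sub_zero 0), fun R => ?_⟩
    obtain ⟨N, hN, h⟩ := hd.2 R
    obtain ⟨N', hN', h'⟩ := hd'.2 R
    refine ⟨N + N', by positivity, fun u v hu huR hv hvR => ?_⟩
    rw [add_mul]
    exact (norm_sub_le _ _).trans (add_le_add (h u v hu huR hv hvR) (h' u v hu huR hv hvR))
  have hcc : ContinuousOn (Function.uncurry fun σ τ => dd T x σ τ - dd T x τ σ)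
      (Ioi 0 ×ˢ Ioi 0) := hdc.sub hdc'
  have hk : ∀ t s, ∫ p : ℝ × ℝ, kk (2 - α) (t - p.1) (s - p.2) •
      (dd T x p.1 p.2 - dd T x p.2 p.1) = 0 := by
    intro t s
    by_cases hts : 0 < t ∧ 0 < s
    -- both halves equal the left side of the functional equation, which is symmetric in `t` and `s`
    · have i1 := (adm_kk h1).integrable h0 h1 (measurable_kk _) hd hdm t s
      rw [← Measure.volume_eq_prod] at i1
      have i2 := (adm_kk h1).integrable h0 h1 (measurable_kk _) hd' hdm' t s
      rw [← Measure.volume_eq_prod] at i2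
      simp only [smul_sub]
      rw [integral_sub i1 i2, sub_eq_zero, kk_dd hα hT hd hdm hts.1 hts.2, add_comm,
        ← kk_dd hα hT hd hdm hts.2 hts.1,
        ← integral_swap' (fun x y => kk (2 - α) (s - x) (t - y)) (dd T x)]
      simp only [kk_symm (2 - α) (s - _)]
    · have : (fun p : ℝ × ℝ => kk (2 - α) (t - p.1) (s - p.2) •
          (dd T x p.1 p.2 - dd T x p.2 p.1)) = fun _ => 0 := by
        funext p
        by_cases hp : 0 < p.1 ∧ 0 < p.2
        · rw [kk, if_neg, zero_smul]
          exact fun hh => hts ⟨by linarith [hh.1, hp.1], by linarith [hh.2, hp.2]⟩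
        · rw [show dd T x p.1 p.2 - dd T x p.2 p.1 = 0 from hc.1 _ _ hp, smul_zero]
      rw [this, integral_zero]
  have key := conv_injective h0 h1 hc (hdm.sub hdm') hcc hk ht hs
  simp only [dd, if_pos (And.intro ht hs), if_pos (And.intro hs ht)] at key
  exact sub_eq_zero.1 key
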